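/- Let k ≥ 1 be an integer and let P be a set of n points in the plane in general position with n ≥ 12(40k+1)². Then the number of pairs (A, B) of disjoint subsets of P with |A| = |B| = 40k+1 such that A and B are mutually avoiding is at least C(n, 80k+2) / C(12(40k+1)², 80k+2), where C(m, r) denotes the binomial coefficient. -/

import Mathlib

noncomputable section

abbrev Plane : Type := EuclideanSpace ℝ (Fin 2)

/-- A set of points in the plane is in general position if no three of its points
are collinear. -/
def GenPos2 (P : Set Plane) : Prop :=
  ∀ a ∈ P, ∀ b ∈ P, ∀ c ∈ P, a ≠ b → a ≠ c → b ≠ c →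
    ¬ Collinear ℝ ({a, b, c} : Set Plane)

/-- `A` avoids `B` if no line through two distinct points of `A` meets the convex
hull of `B`. -/
def Avoids2 (A B : Set Plane) : Prop :=
  ∀ a ∈ A, ∀ a' ∈ A, a ≠ a' →
    Disjoint ((affineSpan ℝ ({a, a'} : Set Plane) : AffineSubspace ℝ Plane) : Set Plane)
      (convexHull ℝ B)

def MutuallyAvoiding2 (A B : Set Plane) : Prop := Avoids2 A B ∧ Avoids2 B A

/-!
Choose linear coordinates in which no two points of a `12 m ^ 2`-point set lie on a vertical line,
and cut the set into three vertical blocks of `4 m ^ 2` points each. A ham-sandwich line of the two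
outer blocks misses the middle block by general position, so at least `2 m ^ 2` points on one of
its sides in the middle block face `2 m ^ 2` points on the other side in each outer block. A line
through two points of one outer part then cannot meet the convex hulls of both the middle part and
the other outer part.

The points of one part are partially ordered by their slopes as seen from all points of another
part, and two points are comparable exactly when the line through them misses the hull of that
other part. By Mirsky's theorem either some outer part has a chain of `2 m` points over the middle
part, or both outer parts have antichains of `m` points; by the crossing property such antichains
are chains over one another, and hence mutually avoiding. In the chain case, a line through two
points of the middle part cannot meet the hulls of both the lower and the upper half of the chain,
and a second use of Mirsky's theorem gives the pair.

Every `12 m ^ 2`-point subset of `P` thus contains a pair, while each pair lies in only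
`(n - 2 m).choose (12 m ^ 2 - 2 m)` such subsets.
-/

open Finset Relation

section Combinatorics

variable {α : Type*} {r : α → α → Prop}

theorem exists_isChain_lt_mem_or_isAntichain [IsStrictOrder α r] {a b : ℕ} {S : Finset α}
    (hS : a * b < #S) :
    (∃ x ∈ S, ∃ T ⊆ S, #T = a ∧ IsChain r (T : Set α) ∧ ∀ y ∈ T, r y x) ∨
      ∃ T ⊆ S, #T = b + 1 ∧ IsAntichain r (T : Set α) := by
  classical
  induction a generalizing S with
  | zero =>
    obtain ⟨x, hx⟩ := card_pos.mp (Nat.zero_le _ |>.trans_lt hS)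
    exact Or.inl ⟨x, hx, ∅, by simp⟩
  | succ a ih =>
    set maxima := {x ∈ S | ∀ y ∈ S, ¬ r x y} with hmaxima
    have hmaxima_subset : maxima ⊆ S := filter_subset _ _
    rcases le_or_gt (b + 1) #maxima with hlarge | hsmall
    · obtain ⟨T, hT, hTcard⟩ := exists_subset_card_eq hlarge
      refine Or.inr ⟨T, hT.trans hmaxima_subset, hTcard, fun x hx y hy _ => ?_⟩
      exact (mem_filter.mp (hT hx)).2 y (hmaxima_subset (hT hy))
    have hrest : a * b < #(S \ maxima) := by
      rw [card_sdiff_of_subset hmaxima_subset]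
      rw [add_one_mul] at hS
      lia
    rcases ih hrest with ⟨x, hx, T, hT, hTcard, hchain, hTx⟩ | ⟨T, hT, hTcard, hanti⟩
    · obtain ⟨hxS, y, hyS, hxy⟩ : x ∈ S ∧ ∃ y ∈ S, r x y := by grind
      have hxT : x ∉ T := fun h => irrefl_of r x (hTx x h)
      refine Or.inl ⟨y, hyS, insert x T, ?_, ?_, ?_, ?_⟩
      · exact insert_subset hxS (hT.trans sdiff_subset)
      · rw [card_insert_of_notMem hxT, hTcard]
      · rw [coe_insert]
        exact hchain.insert fun z hz _ => Or.inr (hTx z hz)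
      · exact forall_mem_insert _ _ _ |>.mpr ⟨hxy, fun z hz => trans_of r (hTx z hz) hxy⟩
    · exact Or.inr ⟨T, hT.trans sdiff_subset, hTcard, hanti⟩

theorem exists_isChain_or_isAntichain [IsStrictOrder α r] {a b : ℕ} {S : Finset α}
    (hS : a * b ≤ #S) :
    (∃ T ⊆ S, #T = a ∧ IsChain r (T : Set α)) ∨
      ∃ T ⊆ S, #T = b ∧ IsAntichain r (T : Set α) := by
  obtain rfl | hb := b.eq_zero_or_pos
  · exact Or.inr ⟨∅, by simp⟩
  obtain rfl | ha := a.eq_zero_or_pos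
  · exact Or.inl ⟨∅, by simp⟩
  have hlt : a * (b - 1) < #S := (Nat.mul_lt_mul_of_pos_left (by lia) ha).trans_le hS
  rcases exists_isChain_lt_mem_or_isAntichain (r := r) hlt with
    ⟨-, -, T, hT, hTcard, hchain, -⟩ | ⟨T, hT, hTcard, hanti⟩
  · exact Or.inl ⟨T, hT, hTcard, hchain⟩
  · exact Or.inr ⟨T, hT, by lia, hanti⟩

theorem isChain_of_isAntichain_of_symmGen_or {r₁ r₂ : α → α → Prop} {S : Set α}
    (hS : IsAntichain r₁ S) (h : S.Pairwise fun x y => SymmGen r₁ x y ∨ SymmGen r₂ x y) :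
    IsChain r₂ S := fun _ hx _ hy hxy =>
  (h hx hy hxy).resolve_left <| not_or.mpr ⟨hS hx hy hxy, hS hy hx hxy.symm⟩

theorem exists_subset_card_eq_forall_lt {β : Type*} [LinearOrder β] [DecidableEq α] {f : α → β}
    {S : Finset α} (hf : Set.InjOn f S) {k : ℕ} (hk : k ≤ #S) :
    ∃ T ⊆ S, #T = k ∧ ∀ x ∈ T, ∀ y ∈ S \ T, f x < f y := by
  induction k with
  | zero => exact ⟨∅, by simp⟩
  | succ k ih =>
    obtain ⟨T, hTS, hTcard, hlt⟩ := ih (by lia)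
    have hrest : (S \ T).Nonempty := by
      rw [← card_pos, card_sdiff_of_subset hTS]
      lia
    obtain ⟨x, hx, hmin⟩ := exists_min_image (S \ T) f hrest
    obtain ⟨hxS, hxT⟩ := mem_sdiff.mp hx
    refine ⟨insert x T, insert_subset hxS hTS, by rw [card_insert_of_notMem hxT, hTcard], ?_⟩
    intro z hz y hy
    rw [sdiff_insert, mem_erase] at hy
    obtain ⟨hyx, hy⟩ := hy
    rcases mem_insert.mp hz with rfl | hz
    · exact (hmin y hy).lt_of_ne fun h => hyx (hf hxS (mem_sdiff.mp hy).1 h).symm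
    · exact hlt z hz y hy

theorem choose_card_le_card_mul_choose {ι : Type*} [Finite ι] {P : Finset α} {N k : ℕ}
    {f : ι → Finset α} (hf : ∀ i, f i ∈ powersetCard k P) (hN : N ≤ #P)
    (hcover : ∀ S ∈ powersetCard N P, ∃ i, f i ⊆ S) :
    (#P).choose k ≤ Nat.card ι * N.choose k := by
  classical
  have := Fintype.ofFinite ι
  have hfP (i : ι) : f i ⊆ P := (mem_powersetCard.mp (hf i)).1
  have hfk (i : ι) : #(f i) = k := (mem_powersetCard.mp (hf i)).2
  have hkN : k ≤ N := by
    obtain ⟨S, hS⟩ := powersetCard_nonempty.mpr hN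
    obtain ⟨i, hi⟩ := hcover S hS
    calc k = #(f i) := (hfk i).symm
      _ ≤ #S := card_le_card hi
      _ = N := (mem_powersetCard.mp hS).2
  have hcount : (#P).choose N ≤ Nat.card ι * (#P - k).choose (N - k) := by
    have hunion : powersetCard N P ⊆
        univ.biUnion fun i => {S ∈ powersetCard N P | f i ⊆ S} := fun S hS => by
      obtain ⟨i, hi⟩ := hcover S hS
      exact mem_biUnion.mpr ⟨i, mem_univ i, mem_filter.mpr ⟨hS, hi⟩⟩
    rw [← card_powersetCard, Nat.card_eq_fintype_card, ← card_univ]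
    refine (card_le_card hunion).trans (card_biUnion_le_card_mul _ _ _ fun i _ => ?_)
    rw [card_filter_powersetCard_subset _ _ _ (hfP i) (by rwa [hfk]), hfk]
  refine Nat.le_of_mul_le_mul_right ?_ (Nat.choose_pos (Nat.sub_le_sub_right hN k))
  calc (#P).choose k * (#P - k).choose (N - k)
      = (#P).choose N * N.choose k := (Nat.choose_mul hkN).symm
    _ ≤ Nat.card ι * (#P - k).choose (N - k) * N.choose k := Nat.mul_le_mul_right _ hcount
    _ = Nat.card ι * N.choose k * (#P - k).choose (N - k) := by ring

end Combinatorics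

section Slopes

variable {α : Type*} {u v : α → ℝ} {A A' B B' : Set α} {a a' p q x y : α}

/-- Every point of `A` lies strictly to the left of every point of `B`, where `u` is the horizontal
coordinate. -/
def LeftOf (u : α → ℝ) (A B : Set α) : Prop :=
  ∀ ⦃a⦄, a ∈ A → ∀ ⦃b⦄, b ∈ B → u a < u b

/-- `A` and `B` are strictly separated by a vertical line, where `u` is the horizontal
coordinate. -/
def SideBySide (u : α → ℝ) (A B : Set α) : Prop :=
  LeftOf u A B ∨ LeftOf u B A

/-- `M` is strictly separated from `X` and from `Z` by vertical lines, with `X` and `Z` on opposite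
sides of it, where `u` is the horizontal coordinate. -/
def LiesBetween (u : α → ℝ) (X M Z : Set α) : Prop :=
  (LeftOf u X M ∧ LeftOf u M Z) ∨ (LeftOf u Z M ∧ LeftOf u M X)

/-- The slope of the line through `p` and `q` in the coordinates `u`, `v`; its junk value for a
vertical line is `0`. -/
def chordSlope (u v : α → ℝ) (p q : α) : ℝ :=
  (v q - v p) / (u q - u p)

/-- Twice the signed area of the triangle `p q x` in the coordinates `u`, `v`; it is positive when
`x` lies to the left of the line directed from `p` to `q`. -/
def orient (u v : α → ℝ) (p q x : α) : ℝ :=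
  (u q - u p) * (v x - v p) - (v q - v p) * (u x - u p)

/-- Every point of `B` sees `p` at a smaller slope than `q`. If `B` and `{p, q}` are side by side,
then `p` and `q` are comparable for this relation exactly when the line `p q` has all of `B`
strictly on one side. -/
def SeesBelow (u v : α → ℝ) (B : Set α) (p q : α) : Prop :=
  ∀ b ∈ B, chordSlope u v b p < chordSlope u v b q

/-- Any two points of each of the sets `A` and `B` are seen in the same order from all points of the
other one. -/
def MutuallyOrdered (u v : α → ℝ) (A B : Set α) : Prop :=
  IsChain (SeesBelow u v B) A ∧ IsChain (SeesBelow u v A) B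

theorem LeftOf.mono (h : LeftOf u A B) (hA : A' ⊆ A) (hB : B' ⊆ B) : LeftOf u A' B' :=
  fun _ ha _ hb => h (hA ha) (hB hb)

theorem LeftOf.trans {C : Set α} (hAB : LeftOf u A B) (hBC : LeftOf u B C) (hB : B.Nonempty) :
    LeftOf u A C :=
  fun _ ha _ hc => (hAB ha hB.some_mem).trans (hBC hB.some_mem hc)

namespace SideBySide

theorem symm (h : SideBySide u A B) : SideBySide u B A :=
  Or.symm h

theorem mono (h : SideBySide u A B) (hA : A' ⊆ A) (hB : B' ⊆ B) : SideBySide u A' B' :=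
  h.imp (·.mono hA hB) (·.mono hB hA)

theorem disjoint (h : SideBySide u A B) : Disjoint A B :=
  Set.disjoint_left.mpr fun _ ha hb => h.elim (fun h => (h ha hb).false) fun h => (h hb ha).false

theorem mul_sub_pos (h : SideBySide u A B) (ha : a ∈ A) (ha' : a' ∈ A) (hx : x ∈ B) :
    0 < (u a - u x) * (u a' - u x) :=
  h.elim
    (fun h => mul_pos_of_neg_of_neg (sub_neg.mpr (h ha hx)) (sub_neg.mpr (h ha' hx)))
    (fun h => mul_pos (sub_pos.mpr (h hx ha)) (sub_pos.mpr (h hx ha')))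

end SideBySide

namespace LiesBetween

variable {X X' M M' Z Z' : Set α}

theorem mono (h : LiesBetween u X M Z) (hX : X' ⊆ X) (hM : M' ⊆ M) (hZ : Z' ⊆ Z) :
    LiesBetween u X' M' Z' :=
  h.imp (fun h => ⟨h.1.mono hX hM, h.2.mono hM hZ⟩) fun h => ⟨h.1.mono hZ hM, h.2.mono hM hX⟩

theorem symm (h : LiesBetween u X M Z) : LiesBetween u Z M X :=
  Or.symm h

theorem sideBySide_left (h : LiesBetween u X M Z) : SideBySide u X M :=
  h.imp And.left And.right

theorem sideBySide (h : LiesBetween u X M Z) (hM : M.Nonempty) : SideBySide u X Z :=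
  h.imp (fun h => h.1.trans h.2 hM) (fun h => h.1.trans h.2 hM)

end LiesBetween

theorem orient_rotate (u v : α → ℝ) (p q x : α) : orient u v p q x = orient u v q x p := by
  unfold orient
  ring

theorem orient_swap (u v : α → ℝ) (p q x : α) : orient u v q p x = -orient u v p q x := by
  unfold orient
  ring

theorem chordSlope_sub_chordSlope (hq : u q ≠ u p) (hx : u x ≠ u p) :
    chordSlope u v p x - chordSlope u v p q =
      orient u v p q x / ((u q - u p) * (u x - u p)) := by
  unfold chordSlope orient
  field_simp [sub_ne_zero.mpr hq, sub_ne_zero.mpr hx]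

theorem chordSlope_lt_chordSlope_iff_of_pos (h : 0 < (u q - u p) * (u x - u p)) :
    chordSlope u v p q < chordSlope u v p x ↔ 0 < orient u v p q x := by
  have hq : u q ≠ u p := sub_ne_zero.mp (left_ne_zero_of_mul h.ne')
  have hx : u x ≠ u p := sub_ne_zero.mp (right_ne_zero_of_mul h.ne')
  rw [← sub_pos, chordSlope_sub_chordSlope hq hx, div_pos_iff_of_pos_right h]

theorem chordSlope_lt_chordSlope_iff_of_neg (h : (u q - u p) * (u x - u p) < 0) :
    chordSlope u v p q < chordSlope u v p x ↔ orient u v p q x < 0 := by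
  have hq : u q ≠ u p := sub_ne_zero.mp (left_ne_zero_of_mul h.ne)
  have hx : u x ≠ u p := sub_ne_zero.mp (right_ne_zero_of_mul h.ne)
  rw [← sub_pos, chordSlope_sub_chordSlope hq hx, ← neg_div_neg_eq,
    div_pos_iff_of_pos_right (neg_pos.mpr h), neg_pos]

theorem isStrictOrder_seesBelow (hB : B.Nonempty) : IsStrictOrder α (SeesBelow u v B) where
  irrefl _ h := (h _ hB.some_mem).false
  trans _ _ _ h h' b hb := (h b hb).trans (h' b hb)

theorem isChain_seesBelow_mono (h : IsChain (SeesBelow u v B) A) (hB : B' ⊆ B) (hA : A' ⊆ A) :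
    IsChain (SeesBelow u v B') A' :=
  (h.mono hA).mono_rel fun _ _ hsees b hb => hsees b (hB hb)

theorem seesBelow_iff_forall_orient_pos (h : SideBySide u A B) (ha : a ∈ A) (ha' : a' ∈ A) :
    SeesBelow u v B a a' ↔ ∀ b ∈ B, 0 < orient u v a a' b := by
  refine forall₂_congr fun b hb => ?_
  rw [chordSlope_lt_chordSlope_iff_of_pos (h.mul_sub_pos ha ha' hb), orient_rotate]

theorem symmGen_seesBelow_iff_forall_orient (h : SideBySide u A B) (ha : a ∈ A) (ha' : a' ∈ A) :
    SymmGen (SeesBelow u v B) a a' ↔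
      (∀ b ∈ B, 0 < orient u v a a' b) ∨ ∀ b ∈ B, orient u v a a' b < 0 := by
  simp only [SymmGen, seesBelow_iff_forall_orient_pos h ha ha',
    seesBelow_iff_forall_orient_pos h ha' ha, orient_swap u v a a', neg_pos]

theorem symmGen_seesBelow_of_forall_chordSlope (h : SideBySide u B A) (hx : x ∈ B) (hy : y ∈ B)
    (hxy : u x ≠ u y)
    (hslope : (∀ a ∈ A, chordSlope u v x a < chordSlope u v x y) ∨
      ∀ a ∈ A, chordSlope u v x y < chordSlope u v x a) :
    SymmGen (SeesBelow u v A) x y := by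
  have hsign : (∀ a ∈ A, 0 < (u y - u x) * (u a - u x)) ∨
      ∀ a ∈ A, (u y - u x) * (u a - u x) < 0 := by
    rcases hxy.lt_or_gt with hlt | hgt <;> rcases h with h | h
    · exact Or.inl fun a ha => mul_pos (sub_pos.mpr hlt) (sub_pos.mpr (h hx ha))
    · exact Or.inr fun a ha => mul_neg_of_pos_of_neg (sub_pos.mpr hlt) (sub_neg.mpr (h ha hx))
    · exact Or.inr fun a ha => mul_neg_of_neg_of_pos (sub_neg.mpr hgt) (sub_pos.mpr (h hx ha))
    · exact Or.inl fun a ha => mul_pos_of_neg_of_neg (sub_neg.mpr hgt) (sub_neg.mpr (h ha hx))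
  have hswap (a : α) : orient u v x a y = -orient u v x y a := by
    rw [orient_rotate, orient_swap, ← orient_rotate]
  rw [symmGen_seesBelow_iff_forall_orient h hx hy]
  rcases hsign with hpos | hneg
  · refine hslope.symm.imp (fun hs a ha => ?_) (fun hs a ha => ?_)
    · exact (chordSlope_lt_chordSlope_iff_of_pos (hpos a ha)).mp (hs a ha)
    · rw [← neg_pos, ← hswap]
      exact (chordSlope_lt_chordSlope_iff_of_pos (mul_comm _ (u y - u x) ▸ hpos a ha)).mp (hs a ha)
  · refine hslope.imp (fun hs a ha => ?_) (fun hs a ha => ?_)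
    · rw [← neg_neg_iff_pos, ← hswap]
      exact (chordSlope_lt_chordSlope_iff_of_neg (mul_comm _ (u y - u x) ▸ hneg a ha)).mp (hs a ha)
    · exact (chordSlope_lt_chordSlope_iff_of_neg (hneg a ha)).mp (hs a ha)

theorem symmGen_seesBelow_or_symmGen_seesBelow (hA : SideBySide u B A) (hA' : SideBySide u B A')
    (hx : x ∈ B) (hy : y ∈ B) (hxy : u x ≠ u y)
    (hlt : ∀ a ∈ A, ∀ a' ∈ A', chordSlope u v x a < chordSlope u v x a') :
    SymmGen (SeesBelow u v A) x y ∨ SymmGen (SeesBelow u v A') x y := by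
  by_cases h : ∃ a' ∈ A', chordSlope u v x a' ≤ chordSlope u v x y
  · obtain ⟨a', ha', hle⟩ := h
    exact Or.inl <| symmGen_seesBelow_of_forall_chordSlope hA hx hy hxy <|
      Or.inl fun a ha => (hlt a ha a' ha').trans_le hle
  · push Not at h
    exact Or.inr <| symmGen_seesBelow_of_forall_chordSlope hA' hx hy hxy <| Or.inr h

theorem exists_halves_of_isChain_seesBelow {m : ℕ} {T : Finset α}
    (hB : B.Nonempty) (hT : #T = 2 * m) (hchain : IsChain (SeesBelow u v B) (T : Set α)) :
    ∃ A ⊆ T, ∃ A' ⊆ T, #A = m ∧ #A' = m ∧ ∀ a ∈ A, ∀ a' ∈ A', SeesBelow u v B a a' := by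
  classical
  obtain ⟨b, hb⟩ := hB
  have hinj : Set.InjOn (chordSlope u v b) T := fun x hx y hy heq => by
    by_contra hne
    exact (hchain hx hy hne).elim (fun h => (h b hb).ne heq) (fun h => (h b hb).ne' heq)
  obtain ⟨A, hA, hAcard, hlt⟩ := exists_subset_card_eq_forall_lt hinj (by lia : m ≤ #T)
  refine ⟨A, hA, T \ A, sdiff_subset, hAcard, by rw [card_sdiff_of_subset hA]; lia, ?_⟩
  intro a ha a' ha'
  have hlt_b := hlt a ha a' ha'
  have hne : a ≠ a' := fun h => hlt_b.ne (h ▸ rfl)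
  exact (hchain (hA ha) (sdiff_subset ha') hne).resolve_right fun h => (h b hb).not_gt hlt_b

theorem exists_mutuallyOrdered_of_isChain {m : ℕ} (hm : 0 < m) {T Y : Finset α} (hT : #T = 2 * m)
    (hY : m * m ≤ #Y) (hinj : Set.InjOn u Y) (hsep : SideBySide u (T : Set α) Y)
    (hchain : IsChain (SeesBelow u v Y) (T : Set α)) :
    ∃ A ⊆ T, ∃ B ⊆ Y, #A = m ∧ #B = m ∧ MutuallyOrdered u v (A : Set α) B := by
  have hYne : Y.Nonempty := card_pos.mp ((Nat.mul_pos hm hm).trans_le hY)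
  obtain ⟨A, hA, A', hA', hAcard, hA'card, hAA'⟩ :=
    exists_halves_of_isChain_seesBelow (coe_nonempty.mpr hYne) hT hchain
  have hdich : (Y : Set α).Pairwise fun x y =>
      SymmGen (SeesBelow u v A) x y ∨ SymmGen (SeesBelow u v A') x y := fun x hx y hy hxy =>
    symmGen_seesBelow_or_symmGen_seesBelow (hsep.symm.mono subset_rfl (coe_subset.mpr hA))
      (hsep.symm.mono subset_rfl (coe_subset.mpr hA')) hx hy (hinj.ne hx hy hxy)
      fun a ha a' ha' => hAA' a ha a' ha' x hx
  have hAne : A.Nonempty := card_pos.mp (hAcard ▸ hm)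
  have := isStrictOrder_seesBelow (u := u) (v := v) (coe_nonempty.mpr hAne)
  rcases exists_isChain_or_isAntichain (r := SeesBelow u v A) hY with
    ⟨B, hB, hBcard, hBchain⟩ | ⟨B, hB, hBcard, hBanti⟩
  · exact ⟨A, hA, B, hB, hAcard, hBcard,
      isChain_seesBelow_mono hchain (coe_subset.mpr hB) (coe_subset.mpr hA), hBchain⟩
  · exact ⟨A', hA', B, hB, hA'card, hBcard,
      isChain_seesBelow_mono hchain (coe_subset.mpr hB) (coe_subset.mpr hA'),
      isChain_of_isAntichain_of_symmGen_or hBanti (hdich.mono (coe_subset.mpr hB))⟩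

theorem exists_three_blocks {P : Finset α} (hinj : Set.InjOn u P) {k : ℕ}
    (hP : 3 * k ≤ #P) :
    ∃ L ⊆ P, ∃ M ⊆ P, ∃ R ⊆ P, k ≤ #L ∧ k ≤ #M ∧ k ≤ #R ∧
      LeftOf u (L : Set α) M ∧ LeftOf u (M : Set α) R := by
  classical
  obtain ⟨L, hL, hLcard, hLlt⟩ := exists_subset_card_eq_forall_lt hinj (by lia : k ≤ #P)
  have hrest := card_sdiff_of_subset hL
  obtain ⟨M, hM, hMcard, hMlt⟩ := exists_subset_card_eq_forall_lt
    (hinj.mono (coe_subset.mpr sdiff_subset)) (by lia : k ≤ #(P \ L))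
  have hR := card_sdiff_of_subset hM
  exact ⟨L, hL, M, hM.trans sdiff_subset, (P \ L) \ M, sdiff_subset.trans sdiff_subset,
    hLcard.ge, hMcard.ge, by lia, fun x hx y hy => hLlt x hx y (hM hy),
    fun x hx y hy => hMlt x hx y hy⟩

end Slopes

section Median

variable {α β : Type*} [LinearOrder β] {L R : Finset α}

/-- `t` is a value of `f` on `S` that splits `S` evenly: at least half of the points of `S` have
value at least `t`, and at least half have value at most `t`. -/
def IsMedian (f : α → β) (S : Finset α) (t : β) : Prop :=
  (∃ p ∈ S, f p = t) ∧ #S ≤ 2 * #{p ∈ S | t ≤ f p} ∧ #S ≤ 2 * #{p ∈ S | f p ≤ t}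

theorem IsMedian.neg {f : α → ℝ} {t : ℝ} (h : IsMedian f L t) : IsMedian (-f) L (-t) := by
  obtain ⟨⟨p, hp, rfl⟩, hge, hle⟩ := h
  exact ⟨⟨p, hp, rfl⟩, by simpa using hle, by simpa using hge⟩

variable {X : Type*} [TopologicalSpace X] [TopologicalSpace β] [OrderClosedTopology β]

-- The `k`-th largest value is the maximum over all `k`-subsets of the minimum over the subset.
theorem exists_continuous_kth_largest {f : α → X → β} (hf : ∀ p ∈ L, Continuous (f p)) {k : ℕ}
    (hk : 0 < k) (hkL : k ≤ #L) :
    ∃ F : X → β, Continuous F ∧ ∀ x, (∃ p ∈ L, f p x = F x) ∧ k ≤ #{p ∈ L | F x ≤ f p x} ∧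
      #L < k + #{p ∈ L | f p x ≤ F x} := by
  have hne (S : powersetCard k L) : S.1.Nonempty :=
    card_pos.mp (hk.trans_eq (mem_powersetCard.mp S.2).2.symm)
  have hsub (S : powersetCard k L) : S.1 ⊆ L := (mem_powersetCard.mp S.2).1
  have hsets : (powersetCard k L).attach.Nonempty :=
    attach_nonempty_iff.mpr (powersetCard_nonempty.mpr hkL)
  refine ⟨fun x => (powersetCard k L).attach.sup' hsets fun S => S.1.inf' (hne S) (f · x),
    Continuous.finset_sup'_apply _ fun S _ => Continuous.finset_inf'_apply _ fun p hp =>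
      hf p (hsub S hp), fun x => ?_⟩
  set t := (powersetCard k L).attach.sup' hsets fun S => S.1.inf' (hne S) (f · x) with ht
  obtain ⟨S, -, htS⟩ := exists_mem_eq_sup' hsets fun S => S.1.inf' (hne S) (f · x)
  rw [← ht] at htS
  refine ⟨?_, ?_, ?_⟩
  · obtain ⟨p, hp, hpS⟩ := exists_mem_eq_inf' (hne S) (f · x)
    exact ⟨p, hsub S hp, (htS.trans hpS).symm⟩
  · refine (mem_powersetCard.mp S.2).2.ge.trans (card_le_card fun p hp => mem_filter.mpr ?_)
    exact ⟨hsub S hp, htS.trans_le (inf'_le _ hp)⟩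
  · have hsmall : #{p ∈ L | t < f p x} < k := by
      by_contra! hlarge
      obtain ⟨T, hT, hTcard⟩ := exists_subset_card_eq hlarge
      have hTmem : T ∈ powersetCard k L :=
        mem_powersetCard.mpr ⟨hT.trans (filter_subset _ _), hTcard⟩
      obtain ⟨p, hp, hpT⟩ := exists_mem_eq_inf' (hne ⟨T, hTmem⟩) (f · x)
      refine (mem_filter.mp (hT hp)).2.not_ge (hpT.symm.trans_le ?_)
      exact le_sup' (fun S => S.1.inf' (hne S) (f · x)) (mem_attach _ ⟨T, hTmem⟩)
    have hsplit := card_filter_add_card_filter_not (s := L) fun p => f p x ≤ t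
    simp only [not_le] at hsplit
    lia

theorem exists_continuous_isMedian {f : α → X → β} (hf : ∀ p ∈ L, Continuous (f p))
    (hL : L.Nonempty) : ∃ F : X → β, Continuous F ∧ ∀ x, IsMedian (f · x) L (F x) := by
  have hpos := hL.card_pos
  obtain ⟨F, hF, hFmed⟩ :=
    exists_continuous_kth_largest hf (k := (#L + 1) / 2) (by lia) (by lia)
  refine ⟨F, hF, fun x => ?_⟩
  obtain ⟨hmem, hge, hle⟩ := hFmed x
  exact ⟨hmem, by lia, by lia⟩

-- For slopes `s` beyond all chord slopes the order of the two medians is forced, so they cross.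
theorem exists_common_isMedian {u v : α → ℝ} (hL : L.Nonempty) (hR : R.Nonempty)
    (hLR : LeftOf u (L : Set α) R) :
    ∃ s t : ℝ, IsMedian (fun p => v p - s * u p) L t ∧ IsMedian (fun p => v p - s * u p) R t := by
  have hcont (p : α) : Continuous fun s : ℝ => v p - s * u p := by fun_prop
  obtain ⟨F, hF, hFmed⟩ := exists_continuous_isMedian (fun p _ => hcont p) hL
  obtain ⟨G, hG, hGmed⟩ := exists_continuous_isMedian (fun p _ => hcont p) hR
  have hslopes := ((L ×ˢ R).image fun z => chordSlope u v z.1 z.2).finite_toSet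
  obtain ⟨smin, hmin⟩ := hslopes.bddBelow
  obtain ⟨smax, hmax⟩ := hslopes.bddAbove
  have hdiff (s : ℝ) : ∃ p ∈ L, ∃ q ∈ R, 0 < u q - u p ∧
      chordSlope u v p q ∈ ((L ×ˢ R).image fun z => chordSlope u v z.1 z.2) ∧
      F s - G s = (u q - u p) * (s - chordSlope u v p q) := by
    obtain ⟨⟨p, hp, hpF⟩, -⟩ := hFmed s
    obtain ⟨⟨q, hq, hqG⟩, -⟩ := hGmed s
    have hpos : 0 < u q - u p := sub_pos.mpr (hLR hp hq)
    refine ⟨p, hp, q, hq, hpos, mem_image.mpr ⟨(p, q), mk_mem_product hp hq, rfl⟩, ?_⟩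
    rw [← hpF, ← hqG, chordSlope]
    field_simp
    ring
  obtain ⟨s, hs⟩ : (0 : ℝ) ∈ Set.range (F - G) := by
    refine mem_range_of_exists_le_of_exists_ge (hF.sub hG) ⟨smin, ?_⟩ ⟨smax, ?_⟩
    · obtain ⟨p, -, q, -, hpos, hmem, heq⟩ := hdiff smin
      exact heq.trans_le (mul_nonpos_of_nonneg_of_nonpos hpos.le (sub_nonpos.mpr (hmin hmem)))
    · obtain ⟨p, -, q, -, hpos, hmem, heq⟩ := hdiff smax
      exact (mul_nonneg hpos.le (sub_nonneg.mpr (hmax hmem))).trans_eq heq.symm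
  exact ⟨s, F s, hFmed s, sub_eq_zero.mp hs ▸ hGmed s⟩

end Median

section LinearCoordinates

variable {E : Type*} [AddCommGroup E] [Module ℝ E] {u v : E →ₗ[ℝ] ℝ} {A B : Set E}
  {a a' p q : E}

theorem injective_prod_add_smul (h : Function.Injective (u.prod v)) (c : ℝ) :
    Function.Injective ((u + c • v).prod v) := fun x y hxy => by
  obtain ⟨hu, hv⟩ := Prod.ext_iff.mp hxy
  change u x + c * v x = u y + c * v y at hu
  change v x = v y at hv
  exact h (Prod.ext (by rw [hv] at hu; exact add_right_cancel hu) hv)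

theorem exists_injOn_add_smul (h : Function.Injective (u.prod v)) (P : Finset E) :
    ∃ c : ℝ, Set.InjOn (u + c • v) P := by
  obtain ⟨c, hc⟩ := Infinite.exists_notMem_finset
    ((P ×ˢ P).image fun z => (u z.1 - u z.2) / (v z.2 - v z.1))
  refine ⟨c, fun x hx y hy hxy => ?_⟩
  simp only [LinearMap.add_apply, LinearMap.smul_apply, smul_eq_mul] at hxy
  by_contra hne
  have hv : v y - v x ≠ 0 := fun hv => by
    obtain hv : v x = v y := (sub_eq_zero.mp hv).symm
    exact hne (h (Prod.ext (by rw [hv] at hxy; exact add_right_cancel hxy) hv))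
  refine hc (mem_image.mpr ⟨(x, y), mk_mem_product hx hy, ?_⟩)
  rw [div_eq_iff hv]
  linear_combination hxy

theorem orient_eq_linearMap_sub (u v : E →ₗ[ℝ] ℝ) (a a' x : E) :
    orient u v a a' x =
      ((u a' - u a) • v - (v a' - v a) • u) x - ((u a' - u a) • v - (v a' - v a) • u) a := by
  simp only [orient, LinearMap.sub_apply, LinearMap.smul_apply, smul_eq_mul]
  ring

theorem lt_of_mem_convexHull {f : E →ₗ[ℝ] ℝ} {t : ℝ} (h : ∀ b ∈ B, t < f b)
    (hp : p ∈ convexHull ℝ B) : t < f p :=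
  convexHull_min h (convex_halfSpace_gt f.isLinear t) hp

theorem le_of_mem_convexHull {f : E →ₗ[ℝ] ℝ} {t : ℝ} (h : ∀ b ∈ B, f b ≤ t)
    (hp : p ∈ convexHull ℝ B) : f p ≤ t :=
  convexHull_min h (convex_halfSpace_le f.isLinear t) hp

theorem LeftOf.convexHull (h : LeftOf u A B) : LeftOf u (convexHull ℝ A) (convexHull ℝ B) :=
  fun _ ha _ hb => lt_of_mem_convexHull (fun _ hy =>
    convexHull_min (fun _ hx => h hx hy) (convex_halfSpace_lt u.isLinear _) ha) hb

theorem disjoint_affineSpan_pair_convexHull (h : ∀ b ∈ B, 0 < orient u v a a' b) :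
    Disjoint (affineSpan ℝ {a, a'} : Set E) (convexHull ℝ B) := by
  refine Set.disjoint_left.mpr fun p hline hhull => ?_
  obtain ⟨c, rfl⟩ := mem_affineSpan_pair_iff_exists_lineMap_eq.mp hline
  simp only [orient_eq_linearMap_sub, sub_pos] at h
  refine (lt_of_mem_convexHull h hhull).ne ?_
  simp only [AffineMap.lineMap_apply_module', map_add, map_smul, map_sub, LinearMap.sub_apply,
    LinearMap.smul_apply, smul_eq_mul]
  ring

theorem disjoint_affineSpan_pair_convexHull_of_symmGen (hsep : SideBySide u A B) (ha : a ∈ A)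
    (ha' : a' ∈ A) (h : SymmGen (SeesBelow u v B) a a') :
    Disjoint (affineSpan ℝ {a, a'} : Set E) (convexHull ℝ B) := by
  rcases h with h | h
  · exact disjoint_affineSpan_pair_convexHull ((seesBelow_iff_forall_orient_pos hsep ha ha').mp h)
  · rw [Set.pair_comm]
    exact disjoint_affineSpan_pair_convexHull ((seesBelow_iff_forall_orient_pos hsep ha' ha).mp h)

theorem exists_mem_convexHull_orient_eq_zero (hsep : SideBySide u A B) (ha : a ∈ A) (ha' : a' ∈ A)
    (h : ¬ SymmGen (SeesBelow u v B) a a') : ∃ p ∈ convexHull ℝ B, orient u v a a' p = 0 := by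
  rw [symmGen_seesBelow_iff_forall_orient hsep ha ha'] at h
  push Not at h
  obtain ⟨⟨b, hb, hb_le⟩, c, hc, hc_ge⟩ := h
  simp only [orient_eq_linearMap_sub, sub_nonpos, sub_nonneg, sub_eq_zero] at hb_le hc_ge ⊢
  exact ((convex_convexHull ℝ B).linear_image _).ordConnected.out
    (Set.mem_image_of_mem _ (subset_convexHull ℝ B hb))
    (Set.mem_image_of_mem _ (subset_convexHull ℝ B hc)) ⟨hb_le, hc_ge⟩

theorem mem_affineSpan_pair_of_orient_eq_zero (hcoord : Function.Injective (u.prod v))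
    (hne : u a ≠ u a') (hp : orient u v a a' p = 0) : p ∈ affineSpan ℝ {a, a'} := by
  have hd : u a' - u a ≠ 0 := sub_ne_zero.mpr hne.symm
  refine mem_affineSpan_pair_iff_exists_lineMap_eq.mpr ⟨(u p - u a) / (u a' - u a), hcoord ?_⟩
  unfold orient at hp
  refine Prod.ext (?_ : u _ = u p) (?_ : v _ = v p) <;>
    simp only [AffineMap.lineMap_apply_module', map_add, map_smul, map_sub, smul_eq_mul]
  · field_simp
    ring
  · field_simp
    linear_combination -hp

theorem le_of_orient_eq_zero {f : E →ₗ[ℝ] ℝ} {t : ℝ} (hf : f ∈ Submodule.span ℝ {u, v})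
    (hne : u a ≠ u a') (hp : orient u v a a' p = 0) (hq : orient u v a a' q = 0)
    (hbtw : 0 < (u p - u a) * (u q - u p)) (ha_le : f a ≤ t) (hq_le : f q ≤ t) : f p ≤ t := by
  obtain ⟨c, d, rfl⟩ := Submodule.mem_span_pair.mp hf
  simp only [LinearMap.add_apply, LinearMap.smul_apply, smul_eq_mul] at ha_le hq_le ⊢
  unfold orient at hp hq
  have hinterp : (u q - u a) * (c * u p + d * v p) =
      (u q - u p) * (c * u a + d * v a) + (u p - u a) * (c * u q + d * v q) := by
    refine mul_left_cancel₀ (sub_ne_zero.mpr hne.symm) ?_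
    linear_combination d * (u q - u a) * hp - d * (u p - u a) * hq
  rcases pos_and_pos_or_neg_and_neg_of_mul_pos hbtw with ⟨hpa, hqp⟩ | ⟨hpa, hqp⟩
  · nlinarith
  · nlinarith

namespace LiesBetween

variable {X M Z : Set E}

theorem mul_sub_pos_of_mem_convexHull (h : LiesBetween u X M Z) (ha : a ∈ X)
    (hp : p ∈ convexHull ℝ M) (hq : q ∈ convexHull ℝ Z) : 0 < (u p - u a) * (u q - u p) := by
  have ha := subset_convexHull ℝ X ha
  rcases h with ⟨hXM, hMZ⟩ | ⟨hZM, hMX⟩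
  · exact mul_pos (sub_pos.mpr (hXM.convexHull ha hp)) (sub_pos.mpr (hMZ.convexHull hp hq))
  · exact mul_pos_of_neg_of_neg (sub_neg.mpr (hMX.convexHull hp ha))
      (sub_neg.mpr (hZM.convexHull hq hp))

-- Otherwise the line `a a'` enters the half-plane `t < f` over `M` and leaves it again over `Z`.
theorem symmGen_seesBelow_or (h : LiesBetween u X M Z) (hM : M.Nonempty) {f : E →ₗ[ℝ] ℝ} {t : ℝ}
    (hf : f ∈ Submodule.span ℝ {u, v}) (hX_le : ∀ x ∈ X, f x ≤ t) (hM_lt : ∀ x ∈ M, t < f x)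
    (hZ_le : ∀ x ∈ Z, f x ≤ t) (ha : a ∈ X) (ha' : a' ∈ X) (hne : u a ≠ u a') :
    SymmGen (SeesBelow u v M) a a' ∨ SymmGen (SeesBelow u v Z) a a' := by
  by_contra! hcross
  obtain ⟨p, hpM, hp⟩ := exists_mem_convexHull_orient_eq_zero h.sideBySide_left ha ha' hcross.1
  obtain ⟨q, hqZ, hq⟩ := exists_mem_convexHull_orient_eq_zero (h.sideBySide hM) ha ha' hcross.2
  have hfp : f p ≤ t := le_of_orient_eq_zero hf hne hp hq
    (h.mul_sub_pos_of_mem_convexHull ha hpM hqZ) (hX_le a ha) (le_of_mem_convexHull hZ_le hqZ)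
  exact (lt_of_mem_convexHull hM_lt hpM).not_ge hfp

end LiesBetween

theorem exists_mutuallyOrdered_or_isChain {X M Z : Finset E} {m : ℕ} (hm : 0 < m)
    (h : LiesBetween u (X : Set E) M Z) {f : E →ₗ[ℝ] ℝ} {t : ℝ}
    (hf : f ∈ Submodule.span ℝ {u, v}) (hX_le : ∀ x ∈ X, f x ≤ t) (hM_lt : ∀ x ∈ M, t < f x)
    (hZ_le : ∀ x ∈ Z, f x ≤ t) (hXinj : Set.InjOn u X) (hMinj : Set.InjOn u M)
    (hX : 2 * m ^ 2 ≤ #X) (hM : m ^ 2 ≤ #M) :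
    (∃ A ⊆ X, ∃ B ⊆ M, #A = m ∧ #B = m ∧ MutuallyOrdered u v (A : Set E) B) ∨
      ∃ A ⊆ X, #A = m ∧ IsChain (SeesBelow u v Z) (A : Set E) := by
  have hMne : (M : Set E).Nonempty := coe_nonempty.mpr (card_pos.mp ((pow_pos hm 2).trans_le hM))
  have := isStrictOrder_seesBelow (u := u) (v := v) hMne
  have hcard : 2 * m * m ≤ #X := by lia
  rcases exists_isChain_or_isAntichain (r := SeesBelow u v M) hcard with
    ⟨T, hT, hTcard, hchain⟩ | ⟨A, hA, hAcard, hanti⟩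
  · obtain ⟨A, hA, B, hB, hAcard, hBcard, hAB⟩ := exists_mutuallyOrdered_of_isChain hm hTcard
      (by lia) hMinj (h.sideBySide_left.mono (coe_subset.mpr hT) subset_rfl) hchain
    exact Or.inl ⟨A, hA.trans hT, B, hB, hAcard, hBcard, hAB⟩
  · refine Or.inr ⟨A, hA, hAcard, isChain_of_isAntichain_of_symmGen_or hanti ?_⟩
    exact fun a ha a' ha' hne => h.symmGen_seesBelow_or hMne hf hX_le hM_lt hZ_le (hA ha) (hA ha')
      (hXinj.ne (hA ha) (hA ha') hne)

theorem exists_mutuallyOrdered_of_liesBetween {P X M Z : Finset E} {m : ℕ} (hm : 0 < m)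
    (hXP : X ⊆ P) (hMP : M ⊆ P) (hZP : Z ⊆ P) (hinj : Set.InjOn u P)
    (h : LiesBetween u (X : Set E) M Z) {f : E →ₗ[ℝ] ℝ} {t : ℝ}
    (hf : f ∈ Submodule.span ℝ {u, v}) (hX_le : ∀ x ∈ X, f x ≤ t) (hM_lt : ∀ x ∈ M, t < f x)
    (hZ_le : ∀ x ∈ Z, f x ≤ t) (hX : 2 * m ^ 2 ≤ #X) (hM : m ^ 2 ≤ #M) (hZ : 2 * m ^ 2 ≤ #Z) :
    ∃ A ⊆ P, ∃ B ⊆ P, #A = m ∧ #B = m ∧ SideBySide u (A : Set E) B ∧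
      MutuallyOrdered u v (A : Set E) B := by
  have hMne : (M : Set E).Nonempty := coe_nonempty.mpr (card_pos.mp ((pow_pos hm 2).trans_le hM))
  have hXinj : Set.InjOn u X := hinj.mono (coe_subset.mpr hXP)
  have hMinj : Set.InjOn u M := hinj.mono (coe_subset.mpr hMP)
  have hZinj : Set.InjOn u Z := hinj.mono (coe_subset.mpr hZP)
  rcases exists_mutuallyOrdered_or_isChain hm h hf hX_le hM_lt hZ_le hXinj hMinj hX hM with
    ⟨A, hA, B, hB, hAcard, hBcard, hAB⟩ | ⟨A, hA, hAcard, hAchain⟩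
  · exact ⟨A, hA.trans hXP, B, hB.trans hMP, hAcard, hBcard,
      h.sideBySide_left.mono (coe_subset.mpr hA) (coe_subset.mpr hB), hAB⟩
  rcases exists_mutuallyOrdered_or_isChain hm h.symm hf hZ_le hM_lt hX_le hZinj hMinj hZ hM with
    ⟨A, hA, B, hB, hAcard, hBcard, hAB⟩ | ⟨B, hB, hBcard, hBchain⟩
  · exact ⟨A, hA.trans hZP, B, hB.trans hMP, hAcard, hBcard,
      h.symm.sideBySide_left.mono (coe_subset.mpr hA) (coe_subset.mpr hB), hAB⟩
  · exact ⟨A, hA.trans hXP, B, hB.trans hZP, hAcard, hBcard,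
      (h.sideBySide hMne).mono (coe_subset.mpr hA) (coe_subset.mpr hB),
      isChain_seesBelow_mono hAchain (coe_subset.mpr hB) subset_rfl,
      isChain_seesBelow_mono hBchain (coe_subset.mpr hA) subset_rfl⟩

end LinearCoordinates

section HamSandwich

variable {E : Type*} [AddCommGroup E] [Module ℝ E] {u v : E →ₗ[ℝ] ℝ} {P L M R : Finset E}
  {f : E →ₗ[ℝ] ℝ} {t : ℝ} {m : ℕ}

theorem exists_mutuallyOrdered_of_isMedian_of_card_le (hm : 0 < m) (hLP : L ⊆ P) (hMP : M ⊆ P)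
    (hRP : R ⊆ P) (hinj : Set.InjOn u P) (h : LiesBetween u (L : Set E) M R)
    (hf : f ∈ Submodule.span ℝ {u, v}) (hfL : IsMedian f L t) (hfR : IsMedian f R t)
    (hL : 4 * m ^ 2 ≤ #L) (hM : m ^ 2 ≤ #{x ∈ M | t < f x}) (hR : 4 * m ^ 2 ≤ #R) :
    ∃ A ⊆ P, ∃ B ⊆ P, #A = m ∧ #B = m ∧ SideBySide u (A : Set E) B ∧
      MutuallyOrdered u v (A : Set E) B := by
  obtain ⟨-, -, hfL⟩ := hfL
  obtain ⟨-, -, hfR⟩ := hfR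
  have hsub {S : Finset E} (hS : S ⊆ P) (p : E → Prop) [DecidablePred p] : S.filter p ⊆ P :=
    (filter_subset _ _).trans hS
  refine exists_mutuallyOrdered_of_liesBetween hm (hsub hLP (f · ≤ t)) (hsub hMP (t < f ·))
    (hsub hRP (f · ≤ t)) hinj (h.mono ?_ ?_ ?_) (t := t) hf ?_ ?_ ?_ (by lia) hM (by lia)
  any_goals exact coe_subset.mpr (filter_subset _ _)
  all_goals exact fun x hx => (mem_filter.mp hx).2

theorem exists_mutuallyOrdered_of_isMedian (hm : 0 < m) (hLP : L ⊆ P) (hMP : M ⊆ P)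
    (hRP : R ⊆ P) (hinj : Set.InjOn u P) (h : LiesBetween u (L : Set E) M R)
    (hf : f ∈ Submodule.span ℝ {u, v}) (hfL : IsMedian f L t) (hfR : IsMedian f R t)
    (hfM : ∀ x ∈ M, f x ≠ t) (hL : 4 * m ^ 2 ≤ #L) (hM : 2 * m ^ 2 ≤ #M) (hR : 4 * m ^ 2 ≤ #R) :
    ∃ A ⊆ P, ∃ B ⊆ P, #A = m ∧ #B = m ∧ SideBySide u (A : Set E) B ∧
      MutuallyOrdered u v (A : Set E) B := by
  rcases le_or_gt (m ^ 2) #{x ∈ M | t < f x} with habove | habove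
  · exact exists_mutuallyOrdered_of_isMedian_of_card_le hm hLP hMP hRP hinj h hf hfL hfR hL
      habove hR
  have hbelow : m ^ 2 ≤ #{x ∈ M | -t < (-f) x} := by
    have hsplit := card_filter_add_card_filter_not (s := M) fun x => t < f x
    have hflip : {x ∈ M | ¬ t < f x} = {x ∈ M | -t < (-f) x} := filter_congr fun x hx => by
      rw [LinearMap.neg_apply, neg_lt_neg_iff, not_lt, (hfM x hx).le_iff_lt]
    rw [hflip] at hsplit
    lia
  exact exists_mutuallyOrdered_of_isMedian_of_card_le hm hLP hMP hRP hinj h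
    (Submodule.neg_mem _ hf) hfL.neg hfR.neg hL hbelow hR

end HamSandwich

section Plane

theorem GenPos2.mono {P Q : Set Plane} (hP : GenPos2 P) (hQ : Q ⊆ P) : GenPos2 Q :=
  fun a ha b hb c hc => hP a (hQ ha) b (hQ hb) c (hQ hc)

theorem exists_injective_prod_and_injOn (P : Finset Plane) :
    ∃ u v : Plane →ₗ[ℝ] ℝ, Function.Injective (u.prod v) ∧ Set.InjOn u P := by
  let x : Plane →ₗ[ℝ] ℝ := EuclideanSpace.projₗ 0
  let y : Plane →ₗ[ℝ] ℝ := EuclideanSpace.projₗ 1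
  have hxy : Function.Injective (x.prod y) := fun p q hpq => by
    ext i
    fin_cases i
    · exact (Prod.ext_iff.mp hpq).1
    · exact (Prod.ext_iff.mp hpq).2
  obtain ⟨c, hc⟩ := exists_injOn_add_smul hxy P
  exact ⟨x + c • y, y, injective_prod_add_smul hxy c, hc⟩

variable {u v : Plane →ₗ[ℝ] ℝ}

theorem avoids2_of_isChain_seesBelow {A B : Set Plane} (hsep : SideBySide u A B)
    (h : IsChain (SeesBelow u v B) A) : Avoids2 A B :=
  fun _ ha _ ha' hne => disjoint_affineSpan_pair_convexHull_of_symmGen hsep ha ha' (h ha ha' hne)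

theorem MutuallyOrdered.mutuallyAvoiding2 {A B : Set Plane} (h : MutuallyOrdered u v A B)
    (hsep : SideBySide u A B) : MutuallyAvoiding2 A B :=
  ⟨avoids2_of_isChain_seesBelow hsep h.1, avoids2_of_isChain_seesBelow hsep.symm h.2⟩

theorem GenPos2.orient_ne_zero {P : Set Plane} (hP : GenPos2 P)
    (hcoord : Function.Injective (u.prod v)) {p x q : Plane} (hp : p ∈ P) (hx : x ∈ P) (hq : q ∈ P)
    (hpx : u p < u x) (hxq : u x < u q) : orient u v p q x ≠ 0 := fun hzero => by
  have hline := mem_affineSpan_pair_of_orient_eq_zero hcoord (hpx.trans hxq).ne hzero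
  have hne {a b : Plane} (h : u a < u b) : a ≠ b := fun hab => h.ne (congrArg u hab)
  exact hP x hx p hp q hq (hne hpx).symm (hne hxq) (hne (hpx.trans hxq))
    (collinear_insert_of_mem_affineSpan_pair hline)

theorem exists_mutuallyAvoiding2 {P : Finset Plane} (hP : GenPos2 (P : Set Plane)) {m : ℕ}
    (hcard : 12 * m ^ 2 ≤ #P) :
    ∃ A ⊆ P, ∃ B ⊆ P, Disjoint A B ∧ #A = m ∧ #B = m ∧
      MutuallyAvoiding2 (A : Set Plane) B := by
  obtain rfl | hm := m.eq_zero_or_pos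
  · exact ⟨∅, by simp, ∅, by simp [MutuallyAvoiding2, Avoids2]⟩
  have hm2 : 0 < m ^ 2 := pow_pos hm 2
  obtain ⟨u, v, hcoord, hinj⟩ := exists_injective_prod_and_injOn P
  obtain ⟨L, hLP, M, hMP, R, hRP, hL, hM, hR, hLM, hMR⟩ :=
    exists_three_blocks hinj (by lia : 3 * (4 * m ^ 2) ≤ #P)
  have hMne : (M : Set Plane).Nonempty := coe_nonempty.mpr (card_pos.mp (by lia))
  obtain ⟨s, t, hsL, hsR⟩ := exists_common_isMedian (v := v) (card_pos.mp (by lia : 0 < #L))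
    (card_pos.mp (by lia : 0 < #R)) (hLM.trans hMR hMne)
  have hoff : ∀ x ∈ M, (v - s • u) x ≠ t := by
    intro x hx hxt
    obtain ⟨⟨p, hp, hpt⟩, -⟩ := hsL
    obtain ⟨⟨q, hq, hqt⟩, -⟩ := hsR
    refine hP.orient_ne_zero hcoord (hLP hp) (hMP hx) (hRP hq) (hLM hp hx) (hMR hx hq) ?_
    simp only [LinearMap.sub_apply, LinearMap.smul_apply, smul_eq_mul] at hxt
    unfold orient
    linear_combination (u q - u p) * (hxt - hpt) - (u x - u p) * (hqt - hpt)
  have hspan : v - s • u ∈ Submodule.span ℝ {u, v} :=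
    Submodule.mem_span_pair.mpr ⟨-s, 1, by module⟩
  obtain ⟨A, hA, B, hB, hAcard, hBcard, hsep, hAB⟩ := exists_mutuallyOrdered_of_isMedian hm
    hLP hMP hRP hinj (Or.inl ⟨hLM, hMR⟩) hspan hsL hsR hoff hL (by lia) hR
  exact ⟨A, hA, B, hB, disjoint_coe.mp hsep.disjoint, hAcard, hBcard, hAB.mutuallyAvoiding2 hsep⟩

end Plane

theorem many_mutually_avoiding_pairs_general (m : ℕ) (P : Finset Plane)
    (hgp : GenPos2 (P : Set Plane)) (hbig : 12 * m ^ 2 ≤ #P) :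
    (((#P).choose (2 * m) : ℝ) / ((12 * m ^ 2).choose (2 * m) : ℝ)) ≤
      (Nat.card {AB : Finset Plane × Finset Plane //
        AB.1 ⊆ P ∧ AB.2 ⊆ P ∧ Disjoint AB.1 AB.2 ∧ #AB.1 = m ∧ #AB.2 = m ∧
        MutuallyAvoiding2 (AB.1 : Set Plane) (AB.2 : Set Plane)} : ℝ) := by
  classical
  set Pairs := {AB : Finset Plane × Finset Plane //
    AB.1 ⊆ P ∧ AB.2 ⊆ P ∧ Disjoint AB.1 AB.2 ∧ #AB.1 = m ∧ #AB.2 = m ∧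
    MutuallyAvoiding2 (AB.1 : Set Plane) (AB.2 : Set Plane)}
  have : Finite Pairs := Set.Finite.subset (P.powerset ×ˢ P.powerset).finite_toSet
    fun AB h => mk_mem_product (mem_powerset.mpr h.1) (mem_powerset.mpr h.2.1)
  have hunion (AB : Pairs) : AB.1.1 ∪ AB.1.2 ∈ powersetCard (2 * m) P := by
    obtain ⟨AB, hA, hB, hdisj, hAcard, hBcard, -⟩ := AB
    refine mem_powersetCard.mpr ⟨union_subset hA hB, ?_⟩
    rw [card_union_of_disjoint hdisj, hAcard, hBcard, two_mul]
  have hcover : ∀ S ∈ powersetCard (12 * m ^ 2) P, ∃ AB : Pairs, AB.1.1 ∪ AB.1.2 ⊆ S := by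
    intro S hS
    obtain ⟨hSP, hScard⟩ := mem_powersetCard.mp hS
    obtain ⟨A, hA, B, hB, hAB⟩ :=
      exists_mutuallyAvoiding2 (hgp.mono (coe_subset.mpr hSP)) hScard.ge
    exact ⟨⟨(A, B), hA.trans hSP, hB.trans hSP, hAB⟩, union_subset hA hB⟩
  have hpos : 0 < (12 * m ^ 2).choose (2 * m) := Nat.choose_pos (by nlinarith)
  rw [div_le_iff₀ (by exact_mod_cast hpos)]
  exact_mod_cast choose_card_le_card_mul_choose hunion hbig hcover

/-- Counting pairs of mutually avoiding subsets of size `40k+1`. -/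
theorem many_mutually_avoiding_pairs (k : ℕ) (hk : 1 ≤ k) (P : Finset Plane) (n : ℕ)
    (hn : P.card = n) (hgp : GenPos2 (P : Set Plane))
    (hbig : 12 * (40 * k + 1) ^ 2 ≤ n) :
    ((n.choose (80 * k + 2) : ℝ) / ((12 * (40 * k + 1) ^ 2).choose (80 * k + 2) : ℝ)) ≤
      (Nat.card {AB : Finset Plane × Finset Plane //
        AB.1 ⊆ P ∧ AB.2 ⊆ P ∧ Disjoint AB.1 AB.2 ∧
        AB.1.card = 40 * k + 1 ∧ AB.2.card = 40 * k + 1 ∧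
        MutuallyAvoiding2 (AB.1 : Set Plane) (AB.2 : Set Plane)} : ℝ) := by
  subst hn
  simpa only [show 80 * k + 2 = 2 * (40 * k + 1) by ring] using
    many_mutually_avoiding_pairs_general (40 * k + 1) P hgp hbig
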